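/- For all p > 1 and q > 1 with 1/p + 1/q > 1, there exists a constant C_{p,q} > 0, depending only on p and q, such that: for every a < b and all functions f, g : [a;b] → ℝ with no common points of discontinuity, with f of finite p-variation and g of finite q-variation on [a;b], the indefinite Riemann–Stieltjes integral t ↦ ∫_a^t f dg (t ∈ [a;b]) satisfies ‖∫_a^· f dg‖_{q-var,[a;b]} ≤ ( C_{p,q} · ‖f‖_{p-var,[a;b]} + ‖f‖_{∞,[a;b]} ) · ‖g‖_{q-var,[a;b]}. -/

import Mathlib

open Filter Set

/-- Truncated variation of `f` on `[a;b]` with truncation parameter `δ`. -/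
noncomputable def truncVar (f : ℝ → ℝ) (δ a b : ℝ) : ENNReal :=
  ⨆ (n : ℕ) (t : Fin (n + 1) → ℝ) (_ : StrictMono t)
    (_ : ∀ i, t i ∈ Set.Icc a b),
    ∑ i : Fin n, ENNReal.ofReal (|f (t i.succ) - f (t i.castSucc)| - δ)

/-- p-variation of `f` on `[a;b]`. -/
noncomputable def pVar (f : ℝ → ℝ) (p a b : ℝ) : ENNReal :=
  ⨆ (n : ℕ) (t : Fin (n + 1) → ℝ) (_ : StrictMono t)
    (_ : ∀ i, t i ∈ Set.Icc a b),
    ∑ i : Fin n, ENNReal.ofReal (|f (t i.succ) - f (t i.castSucc)| ^ p)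

/-- The p-variation norm `(V^p(f,[a;b]))^{1/p}`. -/
noncomputable def pVarNorm (f : ℝ → ℝ) (p a b : ℝ) : ℝ :=
  (pVar f p a b).toReal ^ (1 / p)

/-- Oscillation norm `sup_{a ≤ s < t ≤ b} |f t - f s|`. -/
noncomputable def oscNorm (f : ℝ → ℝ) (a b : ℝ) : ℝ :=
  sSup {x | ∃ s ∈ Set.Icc a b, ∃ t ∈ Set.Icc a b, s < t ∧ x = |f t - f s|}

/-- Sup norm `sup_{a ≤ t ≤ b} |f t|`. -/
noncomputable def supNorm (f : ℝ → ℝ) (a b : ℝ) : ℝ :=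
  sSup {x | ∃ t ∈ Set.Icc a b, x = |f t|}

/-- `I` is the Riemann–Stieltjes integral `∫_a^b f dg`. -/
def RSIntegral (f g : ℝ → ℝ) (a b : ℝ) (I : ℝ) : Prop :=
  ∀ ε > (0 : ℝ), ∃ δ > (0 : ℝ), ∀ (n : ℕ) (t : Fin (n + 1) → ℝ) (ξ : Fin n → ℝ),
    StrictMono t → t 0 = a → t (Fin.last n) = b →
    (∀ i : Fin n, t i.castSucc ≤ ξ i ∧ ξ i ≤ t i.succ) →
    (∀ i : Fin n, t i.succ - t i.castSucc < δ) →
    |∑ i : Fin n, f (ξ i) * (g (t i.succ) - g (t i.castSucc)) - I| < ε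

/-- `f` is regulated on `[a;b]`: all the relevant one-sided limits exist and are finite. -/
def Regulated (f : ℝ → ℝ) (a b : ℝ) : Prop :=
  (∃ L : ℝ, Tendsto f (nhdsWithin a (Set.Ioi a)) (nhds L)) ∧
  (∃ L : ℝ, Tendsto f (nhdsWithin b (Set.Iio b)) (nhds L)) ∧
  ∀ x ∈ Set.Ioo a b,
    (∃ L : ℝ, Tendsto f (nhdsWithin x (Set.Iio x)) (nhds L)) ∧
    (∃ L : ℝ, Tendsto f (nhdsWithin x (Set.Ioi x)) (nhds L))

/-- `f` and `g` have no common points of discontinuity on `[a;b]`. -/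
def NoCommonDiscont (f g : ℝ → ℝ) (a b : ℝ) : Prop :=
  ∀ x ∈ Set.Icc a b,
    ContinuousWithinAt f (Set.Icc a b) x ∨ ContinuousWithinAt g (Set.Icc a b) x

/-!
The integral is produced by Young's method. For the germ `A s t = f s * (g t - g s)` the defect
`A s t - A s u - A u t` equals `-(f u - f s) * (g t - g u)`, hence is bounded by the product of the
`p`-variation norm of `f` and the `q`-variation norm of `g`, which is the power `1 / p + 1 / q > 1`
of a superadditive function of the interval. Superadditivity lets one split any finite partition
into two parts of at most half the control and one single step, and the resulting recursion bounds
the error of the Riemann sums by a constant times the defect bound. No continuity of the control is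
needed if an additive function close to `A` is built on finite sets first and then extracted by
compactness.

Convergence of all tagged sums needs a control that is uniformly small on short intervals. Without
common discontinuities, the product of the oscillations of `f` and `g` has this property by
compactness, but it is not superadditive. Interpolating between this product and the product of the
variation norms, at the cost of lowering the exponent to some `ϑ ∈ (1, 1 / p + 1 / q)`, gives a
control with both properties, and sewing with it yields convergence and the estimate at once.
-/

section Control

variable {α β : Type*} [Preorder α] [Preorder β] {w w₁ w₂ : α → α → ℝ}

/-- A control in the sense of rough path theory: a nonnegative superadditive function of the
intervals `[s, t]` of `α`. No continuity is required, and the values at pairs with `¬ s ≤ t` are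
irrelevant. -/
structure IsControl (w : α → α → ℝ) : Prop where
  nonneg ⦃s t : α⦄ : s ≤ t → 0 ≤ w s t
  add_le ⦃s u t : α⦄ : s ≤ u → u ≤ t → w s u + w u t ≤ w s t

namespace IsControl

lemma self_eq_zero (hw : IsControl w) (s : α) : w s s = 0 := by
  linarith [hw.nonneg (le_refl s), hw.add_le (le_refl s) (le_refl s)]

lemma mono (hw : IsControl w) {s s' t' t : α} (hs : s ≤ s') (hst : s' ≤ t') (ht : t' ≤ t) :
    w s' t' ≤ w s t := by
  linarith [hw.nonneg hs, hw.nonneg ht, hw.add_le hs hst, hw.add_le (hs.trans hst) ht]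

lemma comp_monotone (hw : IsControl w) {τ : β → α} (hτ : Monotone τ) :
    IsControl fun i j ↦ w (τ i) (τ j) where
  nonneg _ _ h := hw.nonneg (hτ h)
  add_le _ _ _ h h' := hw.add_le (hτ h) (hτ h')

lemma sum_le (hw : IsControl w) {n : ℕ} {τ : Fin (n + 1) → α} (hτ : Monotone τ) :
    ∑ i : Fin n, w (τ i.castSucc) (τ i.succ) ≤ w (τ 0) (τ (Fin.last n)) := by
  induction n with
  | zero => simpa using hw.nonneg (le_refl (τ 0))
  | succ n ih =>
    rw [Fin.sum_univ_castSucc]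
    calc _ ≤ w (τ 0) (τ (Fin.last n).castSucc) + w (τ (Fin.last n).castSucc) (τ (Fin.last _)) :=
          add_le_add_left (ih (hτ.comp Fin.strictMono_castSucc.monotone)) _
      _ ≤ w (τ 0) (τ (Fin.last (n + 1))) := hw.add_le (hτ (Fin.zero_le _)) (hτ (Fin.le_last _))

lemma sum_rpow_le (hw : IsControl w) {θ r : ℝ} (hθ : 0 < θ) {n : ℕ} {τ : Fin (n + 1) → α}
    (hτ : Monotone τ) (hr₀ : 0 ≤ r) (hr : ∀ i : Fin n, w (τ i.castSucc) (τ i.succ) ^ (θ - 1) ≤ r) :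
    ∑ i : Fin n, w (τ i.castSucc) (τ i.succ) ^ θ ≤ r * w (τ 0) (τ (Fin.last n)) := by
  refine le_trans ?_ (mul_le_mul_of_nonneg_left (hw.sum_le hτ) hr₀)
  rw [Finset.mul_sum]
  gcongr with i
  have hi : 0 ≤ w (τ i.castSucc) (τ i.succ) := hw.nonneg (hτ i.castSucc_lt_succ.le)
  calc w (τ i.castSucc) (τ i.succ) ^ θ
      = w (τ i.castSucc) (τ i.succ) ^ (θ - 1) * w (τ i.castSucc) (τ i.succ) := by
        rw [← Real.rpow_add_one' hi (by simpa using hθ.ne'), sub_add_cancel]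
    _ ≤ r * w (τ i.castSucc) (τ i.succ) := mul_le_mul_of_nonneg_right (hr i) hi

lemma mul_of_mono (hw : IsControl w) {k : α → α → ℝ} (hk₀ : ∀ ⦃s t⦄, s ≤ t → 0 ≤ k s t)
    (hk : ∀ ⦃s s' t' t⦄, s ≤ s' → s' ≤ t' → t' ≤ t → k s' t' ≤ k s t) :
    IsControl fun s t ↦ k s t * w s t where
  nonneg _ _ h := mul_nonneg (hk₀ h) (hw.nonneg h)
  add_le s u t hsu hut :=
    calc k s u * w s u + k u t * w u t ≤ k s t * w s u + k s t * w u t :=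
          add_le_add
            (mul_le_mul_of_nonneg_right (hk le_rfl hsu hut) (hw.nonneg hsu))
            (mul_le_mul_of_nonneg_right (hk hsu hut le_rfl) (hw.nonneg hut))
      _ = k s t * (w s u + w u t) := by ring
      _ ≤ k s t * w s t := mul_le_mul_of_nonneg_left (hw.add_le hsu hut) (hk₀ (hsu.trans hut))

end IsControl

lemma rpow_mul_rpow_add_le {c d x₁ x₂ y₁ y₂ : ℝ} (hc : 0 < c) (hd : 0 < d) (hcd : c + d = 1)
    (hx₁ : 0 ≤ x₁) (hx₂ : 0 ≤ x₂) (hy₁ : 0 ≤ y₁) (hy₂ : 0 ≤ y₂) :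
    x₁ ^ c * y₁ ^ d + x₂ ^ c * y₂ ^ d ≤ (x₁ + x₂) ^ c * (y₁ + y₂) ^ d := by
  have holder := Real.inner_le_Lp_mul_Lq_of_nonneg Finset.univ
    (Real.HolderConjugate.inv_inv hc hd hcd) (f := ![x₁ ^ c, x₂ ^ c]) (g := ![y₁ ^ d, y₂ ^ d])
    (by simp [Fin.forall_fin_two, Real.rpow_nonneg, *])
    (by simp [Fin.forall_fin_two, Real.rpow_nonneg, *])
  simpa [Fin.sum_univ_two, Real.rpow_rpow_inv, hc.ne', hd.ne', *] using holder

lemma IsControl.rpow_mul_rpow (hw₁ : IsControl w₁) (hw₂ : IsControl w₂) {c d : ℝ}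
    (hc : 0 < c) (hd : 0 < d) (hcd : c + d = 1) :
    IsControl fun s t ↦ w₁ s t ^ c * w₂ s t ^ d where
  nonneg _ _ h := mul_nonneg (Real.rpow_nonneg (hw₁.nonneg h) _) (Real.rpow_nonneg (hw₂.nonneg h) _)
  add_le s u t hsu hut := by
    have := hw₁.nonneg hsu
    have := hw₁.nonneg hut
    have := hw₂.nonneg hsu
    have := hw₂.nonneg hut
    have := hw₁.nonneg (hsu.trans hut)
    calc _ ≤ (w₁ s u + w₁ u t) ^ c * (w₂ s u + w₂ u t) ^ d := by
          apply rpow_mul_rpow_add_le <;> assumption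
      _ ≤ w₁ s t ^ c * w₂ s t ^ d := by
          gcongr
          exacts [hw₁.add_le hsu hut, hw₂.add_le hsu hut]

end Control

section Sewing

open scoped Topology

variable {E : Type*} [NormedAddCommGroup E] {θ : ℝ}

/-- The constant of the sewing lemma with exponent `θ > 1`: the fixed point of
`C ↦ 2 ^ (1 - θ) * C + 2`, the recursion that halving the control produces. -/
noncomputable def sewingConst (θ : ℝ) : ℝ := 2 / (1 - 2 ^ (1 - θ))

lemma two_rpow_one_sub_lt_one (hθ : 1 < θ) : (2 : ℝ) ^ (1 - θ) < 1 :=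
  Real.rpow_lt_one_of_one_lt_of_neg one_lt_two (sub_neg.2 hθ)

lemma two_le_sewingConst (hθ : 1 < θ) : 2 ≤ sewingConst θ := by
  rw [sewingConst, le_div_iff₀ (sub_pos.2 (two_rpow_one_sub_lt_one hθ))]
  linarith [Real.rpow_nonneg zero_le_two (1 - θ)]

lemma sewingConst_recursion (hθ : 1 < θ) {x : ℝ} (hx : 0 ≤ x) :
    2 * (sewingConst θ * (x / 2) ^ θ) + 2 * x ^ θ = sewingConst θ * x ^ θ := by
  have hfix : sewingConst θ = 2 ^ (1 - θ) * sewingConst θ + 2 := by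
    have := (sub_pos.2 (two_rpow_one_sub_lt_one hθ)).ne'
    rw [sewingConst]
    field_simp
    ring
  have hhalf : 2 * (x / 2) ^ θ = 2 ^ (1 - θ) * x ^ θ := by
    rw [Real.div_rpow hx zero_le_two, Real.rpow_sub two_pos, Real.rpow_one]
    ring
  linear_combination sewingConst θ * hhalf - x ^ θ * hfix

lemma IsControl.exists_halving {w : ℕ → ℕ → ℝ} (hw : IsControl w) {m n : ℕ} (hmn : m < n) :
    ∃ j, m ≤ j ∧ j < n ∧ w m j ≤ w m n / 2 ∧ w (j + 1) n ≤ w m n / 2 := by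
  classical
  have hmn₀ : 0 ≤ w m n := hw.nonneg hmn.le
  let LeftHalf : ℕ → Prop := fun j ↦ m ≤ j ∧ w m j ≤ w m n / 2
  have hm : LeftHalf m := ⟨le_rfl, by linarith [hw.self_eq_zero m]⟩
  obtain ⟨hmj, hleft⟩ : LeftHalf (Nat.findGreatest LeftHalf (n - 1)) :=
    Nat.findGreatest_spec (by omega) hm
  have hjn : Nat.findGreatest LeftHalf (n - 1) ≤ n - 1 := Nat.findGreatest_le _
  have hmax : ∀ k, Nat.findGreatest LeftHalf (n - 1) < k → k ≤ n - 1 → ¬ LeftHalf k :=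
    fun _ ↦ Nat.findGreatest_is_greatest
  generalize Nat.findGreatest LeftHalf (n - 1) = j at *
  refine ⟨j, hmj, by omega, hleft, ?_⟩
  rcases (show j + 1 ≤ n by omega).eq_or_lt with hj | hj
  · rw [hj, hw.self_eq_zero]
    linarith
  · have hright : w m n / 2 < w m (j + 1) := by
      by_contra! h
      exact hmax (j + 1) j.lt_succ_self (by omega) ⟨by omega, h⟩
    linarith [hw.add_le (show m ≤ j + 1 by omega) hj.le]

lemma norm_sum_Ico_sub_le (hθ : 1 < θ) {w : ℕ → ℕ → ℝ} (hw : IsControl w) {A : ℕ → ℕ → E}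
    (hA : ∀ i j k, i ≤ j → j ≤ k → ‖A i k - A i j - A j k‖ ≤ w i k ^ θ) {m n : ℕ} (hmn : m ≤ n) :
    ‖∑ k ∈ Finset.Ico m n, A k (k + 1) - A m n‖ ≤ sewingConst θ * w m n ^ θ := by
  have hC := two_le_sewingConst hθ
  induction hd : n - m using Nat.strong_induction_on generalizing m n with
  | _ d ih =>
  have hmn₀ : 0 ≤ w m n := hw.nonneg hmn
  rcases hmn.eq_or_lt with rfl | hlt
  · calc ‖∑ k ∈ Finset.Ico m m, A k (k + 1) - A m m‖ = ‖A m m - A m m - A m m‖ := by simp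
      _ ≤ w m m ^ θ := hA m m m le_rfl le_rfl
      _ ≤ sewingConst θ * w m m ^ θ :=
        le_mul_of_one_le_left (Real.rpow_nonneg hmn₀ _) (by linarith)
  obtain ⟨j, hmj, hjn, hleft, hright⟩ := hw.exists_halving hlt
  have ih_half : ∀ i k, i ≤ k → k - i < d → w i k ≤ w m n / 2 →
      ‖∑ l ∈ Finset.Ico i k, A l (l + 1) - A i k‖ ≤ sewingConst θ * (w m n / 2) ^ θ :=
    fun i k hik hlen hw_half ↦ (ih _ hlen hik rfl).trans <| by
      have := hw.nonneg hik
      gcongr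
  have defect_le : ∀ i k l, m ≤ i → i ≤ k → k ≤ l → l ≤ n →
      ‖A i l - A i k - A k l‖ ≤ w m n ^ θ :=
    fun i k l hi hik hkl hl ↦ (hA i k l hik hkl).trans <|
      Real.rpow_le_rpow (hw.nonneg (hik.trans hkl)) (hw.mono hi (hik.trans hkl) hl) (by linarith)
  have hsum : ∑ k ∈ Finset.Ico m n, A k (k + 1) - A m n =
      (∑ k ∈ Finset.Ico m j, A k (k + 1) - A m j) +
        (∑ k ∈ Finset.Ico (j + 1) n, A k (k + 1) - A (j + 1) n) -
        (A m n - A m j - A j n) - (A j n - A j (j + 1) - A (j + 1) n) := by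
    rw [← Finset.sum_Ico_consecutive _ hmj hjn.le, Finset.sum_eq_sum_Ico_succ_bot hjn]
    abel
  rw [hsum, ← sewingConst_recursion hθ hmn₀]
  linarith [norm_sub_le_of_le (norm_sub_le_of_le
      (norm_add_le_of_le (ih_half m j hmj (by omega) hleft)
        (ih_half (j + 1) n hjn (by omega) hright))
      (defect_le m j n le_rfl hmj hjn.le le_rfl))
    (defect_le j (j + 1) n hmj j.le_succ hjn le_rfl)]

lemma exists_monotone_range_eq {α : Type*} [LinearOrder α] {D : Finset α} (hD : D.Nonempty) :
    ∃ τ : ℕ → α, Monotone τ ∧ range τ = D := by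
  have hcard := hD.card_pos
  let clamp : ℕ → Fin D.card := fun k ↦ ⟨min k (D.card - 1), by omega⟩
  have hclamp : Monotone clamp := fun i j hij ↦ min_le_min_right _ hij
  have hsurj : Function.Surjective clamp := fun i ↦ ⟨i, Fin.ext (min_eq_left (by omega))⟩
  refine ⟨D.orderEmbOfFin rfl ∘ clamp, (D.orderEmbOfFin rfl).monotone.comp hclamp, ?_⟩
  rw [hsurj.range_comp, Finset.range_orderEmbOfFin]

variable {α : Type*} [LinearOrder α]

lemma exists_sewing_finset (hθ : 1 < θ) {w : α → α → ℝ} (hw : IsControl w) {A : α → α → E}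
    (hA : ∀ s u t, s ≤ u → u ≤ t → ‖A s t - A s u - A u t‖ ≤ w s t ^ θ) (D : Finset α) :
    ∃ Y : α → E, ∀ s ∈ D, ∀ t ∈ D, s ≤ t →
      ‖Y t - Y s - A s t‖ ≤ sewingConst θ * w s t ^ θ := by
  rcases D.eq_empty_or_nonempty with rfl | hD
  · exact ⟨0, by simp⟩
  obtain ⟨τ, hτ, hrange⟩ := exists_monotone_range_eq hD
  have index : ∀ s ∈ D, ∃ k, τ k = s := fun s hs ↦ by
    rwa [← Finset.mem_coe, ← hrange] at hs
  choose! κ hκ using index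
  refine ⟨fun s ↦ ∑ k ∈ Finset.range (κ s), A (τ k) (τ (k + 1)), fun s hs t ht hst ↦ ?_⟩
  have hle : κ s ≤ κ t := by
    rcases hst.eq_or_lt with rfl | hlt
    · exact le_rfl
    · exact (hτ.reflect_lt (by rwa [hκ s hs, hκ t ht])).le
  have hsum := norm_sum_Ico_sub_le hθ (hw.comp_monotone hτ) (A := fun i j ↦ A (τ i) (τ j))
    (fun i j k hij hjk ↦ hA _ _ _ (hτ hij) (hτ hjk)) hle
  rwa [Finset.sum_Ico_eq_sub _ hle, hκ s hs, hκ t ht] at hsum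

lemma exists_forall_norm_sub_sub_le_of_finset [ProperSpace E] (o : α) {A : α → α → E}
    {R : α → α → ℝ} (h : ∀ D : Finset α, ∃ Y : α → E, ∀ s ∈ D, ∀ t ∈ D, s ≤ t →
      ‖Y t - Y s - A s t‖ ≤ R s t) :
    ∃ Y : α → E, Y o = 0 ∧ ∀ s t, s ≤ t → ‖Y t - Y s - A s t‖ ≤ R s t := by
  choose Y hY using h
  let U : Ultrafilter (Finset α) := Ultrafilter.of atTop
  have eventually_mem (t : α) : ∀ᶠ D in (U : Filter (Finset α)), t ∈ D :=
    Ultrafilter.of_le _ <| (eventually_ge_atTop {t}).mono fun _ ↦ Finset.singleton_subset_iff.1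
  have eventually_bounded (t : α) :
      ∃ c r, ∀ᶠ D in (U : Filter (Finset α)), Y D t - Y D o ∈ Metric.closedBall c r := by
    rcases le_total o t with hot | hto
    · refine ⟨A o t, R o t, ?_⟩
      filter_upwards [eventually_mem o, eventually_mem t] with D ho ht
      exact mem_closedBall_iff_norm.2 (hY D o ho t ht hot)
    · refine ⟨-A t o, R t o, ?_⟩
      filter_upwards [eventually_mem o, eventually_mem t] with D ho ht
      rw [mem_closedBall_iff_norm', ← neg_sub (Y D o), neg_sub_neg]
      exact hY D t ht o ho hto
  have exists_limit (t : α) : ∃ y, Tendsto (fun D ↦ Y D t - Y D o) U (𝓝 y) := by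
    obtain ⟨c, r, hball⟩ := eventually_bounded t
    obtain ⟨y, -, hy⟩ := (isCompact_closedBall c r).ultrafilter_le_nhds
      (U.map fun D ↦ Y D t - Y D o) (le_principal_iff.2 hball)
    exact ⟨y, hy⟩
  choose Z hZ using exists_limit
  refine ⟨Z, tendsto_nhds_unique (hZ o) (by simp), fun s t hst ↦ ?_⟩
  refine le_of_tendsto (((hZ t).sub (hZ s)).sub_const (A s t)).norm ?_
  filter_upwards [eventually_mem s, eventually_mem t] with D hs ht
  simpa only [sub_sub_sub_cancel_right] using hY D s hs t ht hst

theorem exists_sewing [ProperSpace E] (hθ : 1 < θ) {w : α → α → ℝ} (hw : IsControl w) (o : α)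
    {A : α → α → E} (hA : ∀ s u t, s ≤ u → u ≤ t → ‖A s t - A s u - A u t‖ ≤ w s t ^ θ) :
    ∃ Y : α → E, Y o = 0 ∧ ∀ s t, s ≤ t →
      ‖Y t - Y s - A s t‖ ≤ sewingConst θ * w s t ^ θ :=
  exists_forall_norm_sub_sub_le_of_finset o (exists_sewing_finset hθ hw hA)

end Sewing

section PVariation

open Matrix

variable {f : ℝ → ℝ} {p s t u x y : ℝ}

lemma sum_le_pVar {n : ℕ} {τ : Fin (n + 1) → ℝ} (hτ : StrictMono τ) (hmem : ∀ i, τ i ∈ Icc s t) :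
    ∑ i : Fin n, ENNReal.ofReal (|f (τ i.succ) - f (τ i.castSucc)| ^ p) ≤ pVar f p s t :=
  le_iSup_of_le n <| le_iSup_of_le τ <| le_iSup_of_le hτ <| le_iSup_of_le hmem le_rfl

lemma pVar_le {c : ENNReal} (h : ∀ (n : ℕ) (τ : Fin (n + 1) → ℝ), StrictMono τ →
      (∀ i, τ i ∈ Icc s t) →
      ∑ i : Fin n, ENNReal.ofReal (|f (τ i.succ) - f (τ i.castSucc)| ^ p) ≤ c) :
    pVar f p s t ≤ c :=
  iSup_le fun n ↦ iSup_le fun τ ↦ iSup_le fun hτ ↦ iSup_le fun hmem ↦ h n τ hτ hmem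

lemma pVar_mono {s' t' : ℝ} (hs : s ≤ s') (ht : t' ≤ t) : pVar f p s' t' ≤ pVar f p s t :=
  pVar_le fun _ _ hτ hmem ↦ sum_le_pVar hτ fun i ↦ Icc_subset_Icc hs ht (hmem i)

lemma ofReal_add_sum_le_pVar (hp : 0 < p) {n : ℕ} {τ : Fin (n + 1) → ℝ} (hτ : StrictMono τ)
    (hmem : ∀ i, τ i ∈ Icc x t) :
    ENNReal.ofReal (|f (τ 0) - f x| ^ p) +
      ∑ i : Fin n, ENNReal.ofReal (|f (τ i.succ) - f (τ i.castSucc)| ^ p) ≤ pVar f p x t := by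
  rcases (hmem 0).1.eq_or_lt with hx | hx
  · simpa [hx, hp.ne'] using sum_le_pVar hτ hmem
  · have hcons : ∀ i, vecCons x τ i ∈ Icc x t :=
      Fin.cases ⟨le_rfl, hx.le.trans (hmem 0).2⟩ hmem
    simpa [Fin.sum_univ_succ] using
      sum_le_pVar (f := f) (p := p) (strictMono_vecCons.2 ⟨hx, hτ⟩) hcons

lemma ofReal_le_pVar (hp : 0 < p) (hxy : x ≤ y) (hyt : y ≤ t) :
    ENNReal.ofReal (|f y - f x| ^ p) ≤ pVar f p x t := by
  simpa using ofReal_add_sum_le_pVar (n := 0) (τ := fun _ ↦ y) hp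
    (fun i j hij ↦ absurd hij (by omega)) fun _ ↦ ⟨hxy, hyt⟩

lemma ofReal_add_pVar_le (hp : 0 < p) (hxy : x ≤ y) (hyt : y ≤ t) :
    ENNReal.ofReal (|f y - f x| ^ p) + pVar f p y t ≤ pVar f p x t := by
  refine add_le_of_le_tsub_left_of_le (ofReal_le_pVar hp hxy hyt) <| pVar_le fun n τ hτ hmem ↦
    ENNReal.le_sub_of_add_le_left ENNReal.ofReal_ne_top ?_
  have hmem' : ∀ i, τ i ∈ Icc x t := fun i ↦ Icc_subset_Icc_left hxy (hmem i)
  rcases (hmem 0).1.eq_or_lt with rfl | hy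
  · exact ofReal_add_sum_le_pVar hp hτ hmem'
  · have hcons : ∀ i, vecCons y τ i ∈ Icc x t := Fin.cases ⟨hxy, hyt⟩ hmem'
    have hsum := ofReal_add_sum_le_pVar (f := f) hp (strictMono_vecCons.2 ⟨hy, hτ⟩) hcons
    rw [Fin.sum_univ_succ] at hsum
    refine le_trans (add_le_add_right ?_ _) hsum
    exact le_add_self

lemma sum_add_pVar_le (hp : 0 < p) {n : ℕ} {τ : Fin (n + 1) → ℝ} (hτ : Monotone τ)
    (hτt : τ (Fin.last n) ≤ t) :
    ∑ i : Fin n, ENNReal.ofReal (|f (τ i.succ) - f (τ i.castSucc)| ^ p) +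
      pVar f p (τ (Fin.last n)) t ≤ pVar f p (τ 0) t := by
  induction n with
  | zero => simp
  | succ n ih =>
    rw [Fin.sum_univ_succ, add_assoc]
    calc _ ≤ ENNReal.ofReal (|f (τ 1) - f (τ 0)| ^ p) + pVar f p (τ 1) t :=
          add_le_add_right (ih (hτ.comp Fin.strictMono_succ.monotone) hτt) _
      _ ≤ pVar f p (τ 0) t :=
          ofReal_add_pVar_le hp (hτ (Fin.zero_le _)) ((hτ (Fin.le_last _)).trans hτt)

lemma pVar_add_le (hp : 0 < p) (hsu : s ≤ u) (hut : u ≤ t) :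
    pVar f p s u + pVar f p u t ≤ pVar f p s t := by
  have hle : pVar f p u t ≤ pVar f p s t := pVar_mono hsu le_rfl
  rcases eq_or_ne (pVar f p u t) ⊤ with htop | hfin
  · rw [htop, add_top, ← htop]
    exact hle
  refine add_le_of_le_tsub_right_of_le hle <| pVar_le fun n τ hτ hmem ↦
    ENNReal.le_sub_of_add_le_right hfin ?_
  calc _ ≤ ∑ i : Fin n, ENNReal.ofReal (|f (τ i.succ) - f (τ i.castSucc)| ^ p) +
          pVar f p (τ (Fin.last n)) t := add_le_add_right (pVar_mono (hmem _).2 le_rfl) _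
    _ ≤ pVar f p (τ 0) t := sum_add_pVar_le hp hτ.monotone ((hmem _).2.trans hut)
    _ ≤ pVar f p s t := pVar_mono (hmem 0).1 le_rfl

variable {a b : ℝ}

lemma isControl_pVar (hp : 0 < p) (hfin : pVar f p a b < ⊤) :
    IsControl fun s t : Icc a b ↦ (pVar f p s t).toReal where
  nonneg _ _ _ := ENNReal.toReal_nonneg
  add_le s u t hsu hut := by
    have fin_sub (x y : Icc a b) : pVar f p x y ≠ ⊤ := ((pVar_mono x.2.1 y.2.2).trans_lt hfin).ne
    rw [← ENNReal.toReal_add (fin_sub s u) (fin_sub u t)]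
    exact ENNReal.toReal_mono (fin_sub s t) (pVar_add_le hp hsu hut)

lemma pVarNorm_nonneg : 0 ≤ pVarNorm f p s t := Real.rpow_nonneg ENNReal.toReal_nonneg _

lemma pVarNorm_rpow (hp : p ≠ 0) : pVarNorm f p s t ^ p = (pVar f p s t).toReal := by
  rw [pVarNorm, one_div, Real.rpow_inv_rpow ENNReal.toReal_nonneg hp]

lemma pVarNorm_mono (hp : 0 < p) (hfin : pVar f p s t < ⊤) {s' t' : ℝ} (hs : s ≤ s')
    (ht : t' ≤ t) : pVarNorm f p s' t' ≤ pVarNorm f p s t :=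
  Real.rpow_le_rpow ENNReal.toReal_nonneg (ENNReal.toReal_mono hfin.ne (pVar_mono hs ht))
    (one_div_nonneg.2 hp.le)

lemma abs_sub_le_pVarNorm (hp : 0 < p) (hfin : pVar f p s t < ⊤) (hx : x ∈ Icc s t)
    (hy : y ∈ Icc s t) : |f y - f x| ≤ pVarNorm f p s t := by
  wlog hxy : x ≤ y generalizing x y
  · rw [abs_sub_comm]
    exact this hy hx (le_of_not_ge hxy)
  rw [← Real.rpow_le_rpow_iff (abs_nonneg _) pVarNorm_nonneg hp, pVarNorm_rpow hp.ne',
    ← ENNReal.ofReal_le_iff_le_toReal hfin.ne]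
  exact (ofReal_le_pVar hp hxy hy.2).trans (pVar_mono hx.1 le_rfl)

lemma abs_le_supNorm (hp : 0 < p) (hfin : pVar f p a b < ⊤) (hx : x ∈ Icc a b) :
    |f x| ≤ supNorm f a b := by
  refine le_csSup ⟨|f x| + pVarNorm f p a b, ?_⟩ ⟨x, hx, rfl⟩
  rintro _ ⟨y, hy, rfl⟩
  linarith [abs_sub_abs_le_abs_sub (f y) (f x), abs_sub_le_pVarNorm hp hfin hx hy]

lemma pVarNorm_le_mul_pVarNorm {g Y : ℝ → ℝ} {M : ℝ} (hp : 0 < p) (hM : 0 ≤ M)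
    (hfin : pVar g p a b < ⊤)
    (hY : ∀ s ∈ Icc a b, ∀ t ∈ Icc a b, s ≤ t → |Y t - Y s| ≤ M * pVarNorm g p s t) :
    pVarNorm Y p a b ≤ M * pVarNorm g p a b := by
  have hYg : pVar Y p a b ≤ ENNReal.ofReal (M ^ p * (pVar g p a b).toReal) := by
    refine pVar_le fun n τ hτ hmem ↦ ?_
    rw [← ENNReal.ofReal_sum_of_nonneg fun i _ ↦ by positivity]
    refine ENNReal.ofReal_le_ofReal ?_
    calc ∑ i : Fin n, |Y (τ i.succ) - Y (τ i.castSucc)| ^ p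
        ≤ ∑ i : Fin n, M ^ p * (pVar g p (τ i.castSucc) (τ i.succ)).toReal := by
          gcongr with i
          rw [← pVarNorm_rpow hp.ne', ← Real.mul_rpow hM pVarNorm_nonneg]
          gcongr
          exact hY _ (hmem _) _ (hmem _) (hτ i.castSucc_lt_succ).le
      _ ≤ M ^ p * (pVar g p (τ 0) (τ (Fin.last n))).toReal := by
          rw [← Finset.mul_sum]
          gcongr
          exact (isControl_pVar hp hfin).sum_le (τ := fun i ↦ ⟨τ i, hmem i⟩) hτ.monotone
      _ ≤ M ^ p * (pVar g p a b).toReal := by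
          gcongr
          exacts [hfin.ne, pVar_mono (hmem _).1 (hmem _).2]
  rw [← Real.rpow_le_rpow_iff pVarNorm_nonneg (mul_nonneg hM pVarNorm_nonneg) hp,
    Real.mul_rpow hM pVarNorm_nonneg, pVarNorm_rpow hp.ne', pVarNorm_rpow hp.ne']
  exact ENNReal.toReal_le_of_le_ofReal (by positivity) hYg

end PVariation

section Oscillation

open scoped Topology Uniformity

variable {α M N : Type*} [Preorder α] [PseudoMetricSpace M] [PseudoMetricSpace N]
  {f : α → M} {g : α → N}

/-- The product of the oscillations of `f` and `g` over the interval `[s, t]`, the oscillation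
being the diameter of the image. -/
noncomputable def oscProd (f : α → M) (g : α → N) (s t : α) : ℝ :=
  Metric.diam (f '' Icc s t) * Metric.diam (g '' Icc s t)

lemma oscProd_nonneg {s t : α} : 0 ≤ oscProd f g s t :=
  mul_nonneg Metric.diam_nonneg Metric.diam_nonneg

lemma oscProd_mono (hf : Bornology.IsBounded (range f)) (hg : Bornology.IsBounded (range g))
    {s s' t' t : α} (hs : s ≤ s') (ht : t' ≤ t) : oscProd f g s' t' ≤ oscProd f g s t :=
  mul_le_mul
    (Metric.diam_mono (image_mono (Icc_subset_Icc hs ht)) (hf.subset (image_subset_range _ _)))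
    (Metric.diam_mono (image_mono (Icc_subset_Icc hs ht)) (hg.subset (image_subset_range _ _)))
    Metric.diam_nonneg Metric.diam_nonneg

lemma dist_mul_dist_le_oscProd (hf : Bornology.IsBounded (range f))
    (hg : Bornology.IsBounded (range g)) {s t x y u v : α} (hx : x ∈ Icc s t) (hy : y ∈ Icc s t)
    (hu : u ∈ Icc s t) (hv : v ∈ Icc s t) :
    dist (f x) (f y) * dist (g u) (g v) ≤ oscProd f g s t :=
  mul_le_mul
    (Metric.dist_le_diam_of_mem (hf.subset (image_subset_range _ _)) (mem_image_of_mem f hx)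
      (mem_image_of_mem f hy))
    (Metric.dist_le_diam_of_mem (hg.subset (image_subset_range _ _)) (mem_image_of_mem g hu)
      (mem_image_of_mem g hv))
    dist_nonneg Metric.diam_nonneg

lemma tendsto_diam_image_Icc {α : Type*} [LinearOrder α] [TopologicalSpace α] [OrderTopology α]
    {f : α → M} {x : α} (hf : ContinuousAt f x) :
    Tendsto (fun z : α × α ↦ Metric.diam (f '' Icc z.1 z.2)) (𝓝 (x, x)) (𝓝 0) := by
  have hIcc : Tendsto (fun z : α × α ↦ Icc z.1 z.2) (𝓝 (x, x)) (𝓝 x).smallSets :=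
    continuousAt_fst.tendsto.Icc continuousAt_snd.tendsto
  refine Metric.nhds_basis_closedBall.tendsto_right_iff.2 fun ε hε ↦ ?_
  have hball : ∀ᶠ y in 𝓝 x, f y ∈ Metric.closedBall (f x) (ε / 2) :=
    hf (Metric.closedBall_mem_nhds _ (half_pos hε))
  filter_upwards [hIcc.eventually (eventually_smallSets_forall.2 hball)] with z hz
  rw [mem_closedBall_zero_iff, Real.norm_of_nonneg Metric.diam_nonneg]
  calc Metric.diam (f '' Icc z.1 z.2) ≤ Metric.diam (Metric.closedBall (f x) (ε / 2)) :=
        Metric.diam_mono (image_subset_iff.2 hz) Metric.isBounded_closedBall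
    _ ≤ 2 * (ε / 2) := Metric.diam_closedBall (half_pos hε).le
    _ = ε := mul_div_cancel₀ _ two_ne_zero

lemma isBoundedUnder_norm_diam_image {ι X : Type*} {h : X → M} (hh : Bornology.IsBounded (range h))
    (l : Filter ι) (S : ι → Set X) :
    l.IsBoundedUnder (· ≤ ·) (norm ∘ fun i ↦ Metric.diam (h '' S i)) :=
  isBoundedUnder_of ⟨Metric.diam (range h), fun i ↦ by
    simpa [abs_of_nonneg Metric.diam_nonneg] using Metric.diam_mono (image_subset_range h (S i)) hh⟩

theorem tendsto_oscProd_uniformity {α : Type*} [LinearOrder α] [UniformSpace α] [CompactSpace α]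
    [OrderTopology α] {f : α → M} {g : α → N} (hf : Bornology.IsBounded (range f))
    (hg : Bornology.IsBounded (range g))
    (hfg : ∀ x, ContinuousAt f x ∨ ContinuousAt g x) :
    Tendsto (fun z : α × α ↦ oscProd f g z.1 z.2) (𝓤 α) (𝓝 0) := by
  rw [compactSpace_uniformity, tendsto_iSup]
  intro x
  rcases hfg x with hfx | hgx
  · exact (tendsto_diam_image_Icc hfx).zero_mul_isBoundedUnder_le
      (isBoundedUnder_norm_diam_image hg _ fun z : α × α ↦ Icc z.1 z.2)
  · exact isBoundedUnder_le_mul_tendsto_zero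
      (isBoundedUnder_norm_diam_image hf _ fun z : α × α ↦ Icc z.1 z.2)
      (tendsto_diam_image_Icc hgx)

end Oscillation

lemma le_interpolation_rpow_le {d n ϑ θ : ℝ} (hϑ : 0 < ϑ) (hϑθ : ϑ < θ) (hd : 0 ≤ d) (hdn : d ≤ n) :
    d ≤ (d ^ (ϑ⁻¹ - θ⁻¹) * n ^ θ⁻¹) ^ ϑ ∧ (d ^ (ϑ⁻¹ - θ⁻¹) * n ^ θ⁻¹) ^ ϑ ≤ n := by
  have hn : 0 ≤ n := hd.trans hdn
  have hinterp : (d ^ (ϑ⁻¹ - θ⁻¹) * n ^ θ⁻¹) ^ ϑ = d ^ (1 - ϑ / θ) * n ^ (ϑ / θ) := by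
    rw [Real.mul_rpow (by positivity) (by positivity), ← Real.rpow_mul hd, ← Real.rpow_mul hn]
    congr 2
    · field_simp
    · field_simp
  have hsplit {x : ℝ} (hx : 0 ≤ x) : x ^ (1 - ϑ / θ) * x ^ (ϑ / θ) = x := by
    rw [← Real.rpow_add' hx (by simp), sub_add_cancel, Real.rpow_one]
  have hθ : 0 < θ := hϑ.trans hϑθ
  have hκ : ϑ / θ ≤ 1 := (div_le_one hθ).2 hϑθ.le
  rw [hinterp]
  constructor
  · calc d = d ^ (1 - ϑ / θ) * d ^ (ϑ / θ) := (hsplit hd).symm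
      _ ≤ d ^ (1 - ϑ / θ) * n ^ (ϑ / θ) := by gcongr
  · calc d ^ (1 - ϑ / θ) * n ^ (ϑ / θ) ≤ n ^ (1 - ϑ / θ) * n ^ (ϑ / θ) := by
          gcongr
      _ = n := hsplit hn

section YoungControl

open scoped Topology Uniformity

variable {f g : ℝ → ℝ} {p q ϑ a b : ℝ}

lemma isControl_pVarNorm_mul_rpow (hp : 0 < p) (hq : 0 < q) (hf : pVar f p a b < ⊤)
    (hg : pVar g q a b < ⊤) :
    IsControl fun s t : Icc a b ↦ (pVarNorm f p s t * pVarNorm g q s t) ^ (1 / p + 1 / q)⁻¹ := by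
  have hsplit : 1 / p * (1 / p + 1 / q)⁻¹ + 1 / q * (1 / p + 1 / q)⁻¹ = 1 := by
    rw [← add_mul, mul_inv_cancel₀ (by positivity)]
  convert (isControl_pVar hp hf).rpow_mul_rpow (isControl_pVar hq hg)
    (by positivity) (by positivity) hsplit using 3
  rw [Real.mul_rpow pVarNorm_nonneg pVarNorm_nonneg, pVarNorm, pVarNorm,
    ← Real.rpow_mul ENNReal.toReal_nonneg, ← Real.rpow_mul ENNReal.toReal_nonneg]

lemma isBounded_range_domRestrict (hp : 0 < p) (hf : pVar f p a b < ⊤) :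
    Bornology.IsBounded (range ((Icc a b).domRestrict f)) :=
  Metric.isBounded_range_iff.2
    ⟨pVarNorm f p a b, fun x y ↦ abs_sub_le_pVarNorm hp hf y.2 x.2⟩

lemma diam_image_domRestrict_le_pVarNorm (hp : 0 < p) (hf : pVar f p a b < ⊤) (s t : Icc a b) :
    Metric.diam ((Icc a b).domRestrict f '' Icc s t) ≤ pVarNorm f p s t := by
  refine Metric.diam_le_of_forall_dist_le pVarNorm_nonneg ?_
  rintro _ ⟨x, hx, rfl⟩ _ ⟨y, hy, rfl⟩
  exact abs_sub_le_pVarNorm hp ((pVar_mono s.2.1 t.2.2).trans_lt hf) hy hx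

/-- The interpolation of exponent `ϑ` between the product of the oscillations of `f` and `g` and
the product of their variation norms. It is superadditive thanks to the second factor and small on
short intervals thanks to the first; for `0 < ϑ < 1 / p + 1 / q` its power `ϑ` lies between these
two products. -/
noncomputable def youngControl (f g : ℝ → ℝ) (p q ϑ : ℝ) {a b : ℝ} (s t : Icc a b) : ℝ :=
  oscProd ((Icc a b).domRestrict f) ((Icc a b).domRestrict g) s t ^ (ϑ⁻¹ - (1 / p + 1 / q)⁻¹) *
    (pVarNorm f p s t * pVarNorm g q s t) ^ (1 / p + 1 / q)⁻¹

lemma isControl_youngControl (hp : 0 < p) (hq : 0 < q) (hϑ : 0 < ϑ) (hϑθ : ϑ < 1 / p + 1 / q)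
    (hf : pVar f p a b < ⊤) (hg : pVar g q a b < ⊤) :
    IsControl (youngControl f g p q ϑ (a := a) (b := b)) :=
  (isControl_pVarNorm_mul_rpow hp hq hf hg).mul_of_mono
    (fun _ _ _ ↦ Real.rpow_nonneg oscProd_nonneg _)
    (fun _ _ _ _ hs _ ht ↦ Real.rpow_le_rpow oscProd_nonneg
      (oscProd_mono (isBounded_range_domRestrict hp hf) (isBounded_range_domRestrict hq hg) hs ht)
      (sub_nonneg.2 (inv_anti₀ hϑ hϑθ.le)))

lemma oscProd_le_youngControl_rpow_le (hp : 0 < p) (hq : 0 < q) (hϑ : 0 < ϑ)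
    (hϑθ : ϑ < 1 / p + 1 / q) (hf : pVar f p a b < ⊤) (hg : pVar g q a b < ⊤) (s t : Icc a b) :
    oscProd ((Icc a b).domRestrict f) ((Icc a b).domRestrict g) s t ≤
        youngControl f g p q ϑ s t ^ ϑ ∧
      youngControl f g p q ϑ s t ^ ϑ ≤ pVarNorm f p s t * pVarNorm g q s t :=
  le_interpolation_rpow_le hϑ hϑθ oscProd_nonneg <|
    mul_le_mul (diam_image_domRestrict_le_pVarNorm hp hf s t)
      (diam_image_domRestrict_le_pVarNorm hq hg s t) Metric.diam_nonneg pVarNorm_nonneg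

lemma abs_mul_abs_le_youngControl_rpow (hp : 0 < p) (hq : 0 < q) (hϑ : 0 < ϑ)
    (hϑθ : ϑ < 1 / p + 1 / q) (hf : pVar f p a b < ⊤) (hg : pVar g q a b < ⊤)
    {s t x y u v : Icc a b} (hx : x ∈ Icc s t) (hy : y ∈ Icc s t) (hu : u ∈ Icc s t)
    (hv : v ∈ Icc s t) : |f x - f y| * |g u - g v| ≤ youngControl f g p q ϑ s t ^ ϑ :=
  (dist_mul_dist_le_oscProd (isBounded_range_domRestrict hp hf) (isBounded_range_domRestrict hq hg)
    hx hy hu hv).trans (oscProd_le_youngControl_rpow_le hp hq hϑ hϑθ hf hg s t).1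

lemma tendsto_youngControl (hp : 0 < p) (hq : 0 < q) (hϑ : 0 < ϑ) (hϑθ : ϑ < 1 / p + 1 / q)
    (hf : pVar f p a b < ⊤) (hg : pVar g q a b < ⊤) (hfg : NoCommonDiscont f g a b) :
    Tendsto (fun z : Icc a b × Icc a b ↦ youngControl f g p q ϑ z.1 z.2) (𝓤 (Icc a b)) (𝓝 0) := by
  have hexp : 0 < ϑ⁻¹ - (1 / p + 1 / q)⁻¹ := sub_pos.2 (inv_strictAnti₀ hϑ hϑθ)
  have hosc := tendsto_oscProd_uniformity (isBounded_range_domRestrict hp hf)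
    (isBounded_range_domRestrict hq hg) fun x ↦ (hfg x x.2).imp
      (continuousWithinAt_iff_continuousAt_domRestrict f x.2).1
      (continuousWithinAt_iff_continuousAt_domRestrict g x.2).1
  refine Tendsto.zero_mul_isBoundedUnder_le
    (by simpa only [Real.zero_rpow hexp.ne'] using hosc.rpow_const (Or.inr hexp.le)) <|
    isBoundedUnder_of ⟨(pVarNorm f p a b * pVarNorm g q a b) ^ (1 / p + 1 / q)⁻¹, fun z ↦ ?_⟩
  have hz : pVarNorm f p z.1 z.2 * pVarNorm g q z.1 z.2 ≤ pVarNorm f p a b * pVarNorm g q a b :=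
    mul_le_mul (pVarNorm_mono hp hf z.1.2.1 z.2.2.2) (pVarNorm_mono hq hg z.1.2.1 z.2.2.2)
      pVarNorm_nonneg pVarNorm_nonneg
  have hz₀ : 0 ≤ pVarNorm f p z.1 z.2 * pVarNorm g q z.1 z.2 :=
    mul_nonneg pVarNorm_nonneg pVarNorm_nonneg
  rw [Function.comp_apply, Real.norm_of_nonneg (by positivity)]
  gcongr

end YoungControl

section Integral

open scoped Topology Uniformity

lemma sum_fin_succ_sub_castSucc {G : Type*} [AddCommGroup G] {n : ℕ} (h : Fin (n + 1) → G) :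
    ∑ i : Fin n, (h i.succ - h i.castSucc) = h (Fin.last n) - h 0 := by
  rw [Finset.sum_sub_distrib, sub_eq_sub_iff_add_eq_add, add_comm _ (h 0),
    add_comm (h (Fin.last n)), ← Fin.sum_univ_succ, ← Fin.sum_univ_castSucc]

variable {f g Y : ℝ → ℝ} {a b θ c : ℝ}

theorem rsIntegral_of_abs_sub_le {ω : Icc a b → Icc a b → ℝ} (hω : IsControl ω)
    (hω₀ : Tendsto (fun z : Icc a b × Icc a b ↦ ω z.1 z.2) (𝓤 (Icc a b)) (𝓝 0)) (hθ : 1 < θ)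
    (hc : 0 ≤ c) (hY : ∀ s x t : Icc a b, s ≤ x → x ≤ t →
      |f x * (g t - g s) - (Y t - Y s)| ≤ c * ω s t ^ θ) (s t : Icc a b) :
    RSIntegral f g s t (Y t - Y s) := by
  intro ε hε
  obtain ⟨r, hr₀, hr⟩ := exists_pos_mul_lt hε (c * ω s t)
  have hsmall : ∀ᶠ z in 𝓤 (Icc a b), ω z.1 z.2 ^ (θ - 1) < r := by
    have hlim := hω₀.rpow_const (Or.inr (sub_nonneg.2 hθ.le))
    rw [Real.zero_rpow (sub_pos.2 hθ).ne'] at hlim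
    exact hlim.eventually_lt_const hr₀
  obtain ⟨δ, hδ, hδω⟩ := Metric.uniformity_basis_dist.eventually_iff.1 hsmall
  refine ⟨δ, hδ, fun n τ ξ hτ hτs hτt hξ hmesh ↦ ?_⟩
  have hmem (i) : τ i ∈ Icc a b :=
    ⟨s.2.1.trans (hτs ▸ hτ.monotone (Fin.zero_le i)),
      (hτt ▸ hτ.monotone (Fin.le_last i)).trans t.2.2⟩
  let τ' : Fin (n + 1) → Icc a b := fun i ↦ ⟨τ i, hmem i⟩
  have hω_small (i : Fin n) : ω (τ' i.castSucc) (τ' i.succ) ^ (θ - 1) ≤ r := by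
    have hdist : dist (τ' i.castSucc) (τ' i.succ) < δ := by
      rw [dist_comm, Subtype.dist_eq, Real.dist_eq, abs_of_pos (sub_pos.2 (hτ i.castSucc_lt_succ))]
      exact hmesh i
    exact (hδω (x := (τ' i.castSucc, τ' i.succ)) hdist).le
  calc |∑ i : Fin n, f (ξ i) * (g (τ i.succ) - g (τ i.castSucc)) - (Y t - Y s)|
      = |∑ i : Fin n, (f (ξ i) * (g (τ i.succ) - g (τ i.castSucc)) -
          (Y (τ i.succ) - Y (τ i.castSucc)))| := by
        rw [Finset.sum_sub_distrib, sum_fin_succ_sub_castSucc fun i ↦ Y (τ i), hτs, hτt]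
    _ ≤ ∑ i : Fin n, c * ω (τ' i.castSucc) (τ' i.succ) ^ θ :=
        (Finset.abs_sum_le_sum_abs _ _).trans <| Finset.sum_le_sum fun i _ ↦
          hY (τ' i.castSucc) ⟨ξ i, (hmem _).1.trans (hξ i).1, (hξ i).2.trans (hmem _).2⟩ (τ' i.succ)
            (hξ i).1 (hξ i).2
    _ ≤ c * (r * ω (τ' 0) (τ' (Fin.last n))) := by
        rw [← Finset.mul_sum]
        gcongr
        exact hω.sum_rpow_le (by linarith) (fun i j hij ↦ hτ.monotone hij) hr₀.le hω_small
    _ = c * ω s t * r := by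
        rw [show τ' 0 = s from Subtype.ext hτs, show τ' (Fin.last n) = t from Subtype.ext hτt]
        ring
    _ < ε := hr

end Integral

section Young

variable {f g : ℝ → ℝ} {p q ϑ a b : ℝ}

theorem exists_youngIntegral (hp : 0 < p) (hq : 0 < q) (hϑ : 1 < ϑ) (hϑθ : ϑ < 1 / p + 1 / q)
    (hab : a ≤ b) (hf : pVar f p a b < ⊤) (hg : pVar g q a b < ⊤) :
    ∃ Y : ℝ → ℝ, Y a = 0 ∧ ∀ s t : Icc a b, s ≤ t →
      |Y t - Y s - f s * (g t - g s)| ≤ sewingConst ϑ * youngControl f g p q ϑ s t ^ ϑ := by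
  have hϑ₀ : 0 < ϑ := zero_lt_one.trans hϑ
  have defect_le : ∀ s u t : Icc a b, s ≤ u → u ≤ t →
      ‖f s * (g t - g s) - f s * (g u - g s) - f u * (g t - g u)‖ ≤
        youngControl f g p q ϑ s t ^ ϑ := fun s u t hsu hut ↦
    calc ‖f s * (g t - g s) - f s * (g u - g s) - f u * (g t - g u)‖
        = |f s - f u| * |g t - g u| := by
          rw [Real.norm_eq_abs, ← abs_mul]
          ring_nf
      _ ≤ youngControl f g p q ϑ s t ^ ϑ :=
          abs_mul_abs_le_youngControl_rpow hp hq hϑ₀ hϑθ hf hg ⟨le_rfl, hsu.trans hut⟩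
            ⟨hsu, hut⟩ ⟨hsu.trans hut, le_rfl⟩ ⟨hsu, hut⟩
  obtain ⟨Y, hY₀, hY⟩ := exists_sewing hϑ (isControl_youngControl hp hq hϑ₀ hϑθ hf hg)
    ⟨a, left_mem_Icc.2 hab⟩ defect_le
  refine ⟨IccExtend hab Y, by rw [IccExtend_left, hY₀], fun s t hst ↦ ?_⟩
  simpa only [IccExtend_val, Real.norm_eq_abs] using hY s t hst

theorem rsIntegral_of_abs_sub_sub_le_youngControl {Y : ℝ → ℝ} {C : ℝ} (hp : 0 < p) (hq : 0 < q)
    (hϑ : 1 < ϑ) (hϑθ : ϑ < 1 / p + 1 / q) (hf : pVar f p a b < ⊤) (hg : pVar g q a b < ⊤)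
    (hfg : NoCommonDiscont f g a b) (hC : 0 ≤ C)
    (hY : ∀ s t : Icc a b, s ≤ t →
      |Y t - Y s - f s * (g t - g s)| ≤ C * youngControl f g p q ϑ s t ^ ϑ) (s t : Icc a b) :
    RSIntegral f g s t (Y t - Y s) := by
  have hϑ₀ : 0 < ϑ := zero_lt_one.trans hϑ
  refine rsIntegral_of_abs_sub_le (isControl_youngControl hp hq hϑ₀ hϑθ hf hg)
    (tendsto_youngControl hp hq hϑ₀ hϑθ hf hg hfg) hϑ (add_nonneg zero_le_one hC)
    (fun s x t hsx hxt ↦ ?_) s t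
  have hst : s ≤ t := hsx.trans hxt
  calc |f x * (g t - g s) - (Y t - Y s)|
      = |(f x - f s) * (g t - g s) - (Y t - Y s - f s * (g t - g s))| := by ring_nf
    _ ≤ |f x - f s| * |g t - g s| + |Y t - Y s - f s * (g t - g s)| := by
        rw [← abs_mul]
        exact abs_sub _ _
    _ ≤ youngControl f g p q ϑ s t ^ ϑ + C * youngControl f g p q ϑ s t ^ ϑ :=
        add_le_add (abs_mul_abs_le_youngControl_rpow hp hq hϑ₀ hϑθ hf hg ⟨hsx, hxt⟩
          ⟨le_rfl, hst⟩ ⟨hst, le_rfl⟩ ⟨le_rfl, hst⟩) (hY s t hst)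
    _ = (1 + C) * youngControl f g p q ϑ s t ^ ϑ := by ring

theorem pVarNorm_le_of_abs_sub_sub_le {Y : ℝ → ℝ} {C : ℝ} (hp : 0 < p) (hq : 0 < q)
    (hab : a ≤ b) (hf : pVar f p a b < ⊤) (hg : pVar g q a b < ⊤) (hC : 0 ≤ C)
    (hY : ∀ s ∈ Icc a b, ∀ t ∈ Icc a b, s ≤ t →
      |Y t - Y s - f s * (g t - g s)| ≤ C * (pVarNorm f p s t * pVarNorm g q s t)) :
    pVarNorm Y q a b ≤ (C * pVarNorm f p a b + supNorm f a b) * pVarNorm g q a b := by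
  have hsup : 0 ≤ supNorm f a b := (abs_nonneg _).trans (abs_le_supNorm hp hf (left_mem_Icc.2 hab))
  refine pVarNorm_le_mul_pVarNorm hq (add_nonneg (mul_nonneg hC pVarNorm_nonneg) hsup) hg
    fun s hs t ht hst ↦ ?_
  have hgst : pVar g q s t < ⊤ := (pVar_mono hs.1 ht.2).trans_lt hg
  calc |Y t - Y s| = |(Y t - Y s - f s * (g t - g s)) + f s * (g t - g s)| := by ring_nf
    _ ≤ |Y t - Y s - f s * (g t - g s)| + |f s| * |g t - g s| := by
        rw [← abs_mul]
        exact abs_add_le _ _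
    _ ≤ C * (pVarNorm f p a b * pVarNorm g q s t) + supNorm f a b * pVarNorm g q s t := by
        gcongr
        · refine (hY s hs t ht hst).trans ?_
          gcongr
          exacts [pVarNorm_nonneg, pVarNorm_mono hp hf hs.1 ht.2]
        · exact abs_le_supNorm hp hf hs
        · exact abs_sub_le_pVarNorm hq hgst (left_mem_Icc.2 hst) (right_mem_Icc.2 hst)
    _ = (C * pVarNorm f p a b + supNorm f a b) * pVarNorm g q s t := by ring

end Young

theorem indefinite_rs_integral_qvar_bound'_general
    (p q : ℝ) (hp : 0 < p) (hq : 0 < q) (hpq : 1 / p + 1 / q > 1) :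
    ∃ C : ℝ, 0 < C ∧ ∀ (a b : ℝ), a ≤ b → ∀ f g : ℝ → ℝ,
      NoCommonDiscont f g a b → pVar f p a b < ⊤ → pVar g q a b < ⊤ →
      ∃ Y : ℝ → ℝ, (∀ t ∈ Set.Icc a b, RSIntegral f g a t (Y t)) ∧
        pVarNorm Y q a b ≤
          (C * pVarNorm f p a b + supNorm f a b) * pVarNorm g q a b := by
  obtain ⟨ϑ, hϑ, hϑθ⟩ := exists_between hpq
  have hC : 0 < sewingConst ϑ := two_pos.trans_le (two_le_sewingConst hϑ)
  refine ⟨sewingConst ϑ, hC, fun a b hab f g hfg hf hg ↦ ?_⟩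
  obtain ⟨Y, hY₀, hY⟩ := exists_youngIntegral hp hq hϑ hϑθ hab hf hg
  refine ⟨Y, fun t ht ↦ ?_, pVarNorm_le_of_abs_sub_sub_le hp hq hab hf hg hC.le
    fun s hs t ht hst ↦ ?_⟩
  · simpa only [hY₀, sub_zero] using rsIntegral_of_abs_sub_sub_le_youngControl hp hq hϑ hϑθ hf hg
      hfg hC.le hY ⟨a, left_mem_Icc.2 hab⟩ ⟨t, ht⟩
  · exact (hY ⟨s, hs⟩ ⟨t, ht⟩ hst).trans <| mul_le_mul_of_nonneg_left
      (oscProd_le_youngControl_rpow_le hp hq (zero_lt_one.trans hϑ) hϑθ hf hg _ _).2 hC.le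

/-- Remark 5 (second estimate): `q`-variation bound for the indefinite
Riemann–Stieltjes integral `t ↦ ∫_a^t f dg`. -/
theorem indefinite_rs_integral_qvar_bound'
    (p q : ℝ) (hp : 1 < p) (hq : 1 < q) (hpq : 1 / p + 1 / q > 1) :
    ∃ C : ℝ, 0 < C ∧ ∀ (a b : ℝ), a < b → ∀ f g : ℝ → ℝ,
      NoCommonDiscont f g a b → pVar f p a b < ⊤ → pVar g q a b < ⊤ →
      ∃ Y : ℝ → ℝ, (∀ t ∈ Set.Icc a b, RSIntegral f g a t (Y t)) ∧
        pVarNorm Y q a b ≤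
          (C * pVarNorm f p a b + supNorm f a b) * pVarNorm g q a b := by
  obtain ⟨C, hC, h⟩ := indefinite_rs_integral_qvar_bound'_general p q
    (zero_lt_one.trans hp) (zero_lt_one.trans hq) hpq
  exact ⟨C, hC, fun a b hab ↦ h a b hab.le⟩
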